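/- (a) For n ≥ 3: |E(𝒯_A³)| ≤ 5·β_A/n. (b) For n ≥ 4: |E(𝒯_A⁴) − 3| ≤ 97·δ_A/n. -/

import Mathlib

open Finset MeasureTheory

/-- Density of the standard normal distribution. -/
noncomputable def gaussD (x : ℝ) : ℝ := (Real.sqrt (2 * Real.pi))⁻¹ * Real.exp (-(x ^ 2) / 2)

/-- Distribution function of the standard normal distribution. -/
noncomputable def gaussCDF (x : ℝ) : ℝ := ∫ t in Set.Iic x, gaussD t

section RankDefs

variable {m : ℕ}

/-- Row mean `a_{i·}`. -/
noncomputable def rowMean (A : Matrix (Fin m) (Fin m) ℝ) (i : Fin m) : ℝ := (∑ j, A i j) / (m : ℝ)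

/-- Column mean `a_{·j}`. -/
noncomputable def colMean (A : Matrix (Fin m) (Fin m) ℝ) (j : Fin m) : ℝ := (∑ i, A i j) / (m : ℝ)

/-- Grand mean `a_{··}`. -/
noncomputable def totMean (A : Matrix (Fin m) (Fin m) ℝ) : ℝ := (∑ i, ∑ j, A i j) / (m : ℝ) ^ 2

/-- Centered entries `a_{ij} − a_{i·} − a_{·j} + a_{··}`. -/
noncomputable def ctr (A : Matrix (Fin m) (Fin m) ℝ) (i j : Fin m) : ℝ :=
  A i j - rowMean A i - colMean A j + totMean A

/-- `σ_A²`. -/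
noncomputable def sigma2 (A : Matrix (Fin m) (Fin m) ℝ) : ℝ :=
  (∑ i, ∑ j, ctr A i j ^ 2) / ((m : ℝ) - 1)

/-- `σ_A`. -/
noncomputable def sdev (A : Matrix (Fin m) (Fin m) ℝ) : ℝ := Real.sqrt (sigma2 A)

/-- Standardized matrix `Â = (â_{ij})`. -/
noncomputable def hatM (A : Matrix (Fin m) (Fin m) ℝ) : Matrix (Fin m) (Fin m) ℝ :=
  fun i j => ctr A i j / sdev A

/-- `μ_A = n·a_{··}`. -/
noncomputable def muM (A : Matrix (Fin m) (Fin m) ℝ) : ℝ := (m : ℝ) * totMean A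

/-- The linear rank statistic `T_A(π) = Σ_i a_{iπ(i)}`. -/
noncomputable def rankT (A : Matrix (Fin m) (Fin m) ℝ) (π : Equiv.Perm (Fin m)) : ℝ :=
  ∑ i, A i (π i)

/-- Expectation with respect to the uniform distribution on permutations. -/
noncomputable def permExp (f : Equiv.Perm (Fin m) → ℝ) : ℝ :=
  (∑ π : Equiv.Perm (Fin m), f π) / (Nat.factorial m : ℝ)

/-- The standardized rank statistic `𝒯_A = (T_A − μ_A)/σ_A`. -/
noncomputable def rankTstd (A : Matrix (Fin m) (Fin m) ℝ) (π : Equiv.Perm (Fin m)) : ℝ :=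
  (rankT A π - muM A) / sdev A

/-- `F_A`, the distribution function of `T_A`. -/
noncomputable def Fr (A : Matrix (Fin m) (Fin m) ℝ) (z : ℝ) : ℝ :=
  permExp (fun π => if rankT A π ≤ z then (1 : ℝ) else 0)

/-- `ℱ_A`, the distribution function of `𝒯_A`. -/
noncomputable def Fstd (A : Matrix (Fin m) (Fin m) ℝ) (z : ℝ) : ℝ :=
  permExp (fun π => if rankTstd A π ≤ z then (1 : ℝ) else 0)

/-- `β_A = Σ_{i,j} |â_{ij}|³`. -/
noncomputable def betaM (A : Matrix (Fin m) (Fin m) ℝ) : ℝ := ∑ i, ∑ j, |hatM A i j| ^ 3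

/-- `δ_A = Σ_{i,j} |â_{ij}|⁴`. -/
noncomputable def deltaM (A : Matrix (Fin m) (Fin m) ℝ) : ℝ := ∑ i, ∑ j, |hatM A i j| ^ 4

/-- `η_A = Σ_{i,j} |â_{ij}|⁵`. -/
noncomputable def etaM (A : Matrix (Fin m) (Fin m) ℝ) : ℝ := ∑ i, ∑ j, |hatM A i j| ^ 5

/-- `D_A = (δ_A/n)^{1/2}`. -/
noncomputable def DM (A : Matrix (Fin m) (Fin m) ℝ) : ℝ := Real.sqrt (deltaM A / (m : ℝ))

/-- `E_A = (η_A/n)^{1/3}`. -/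
noncomputable def EM (A : Matrix (Fin m) (Fin m) ℝ) : ℝ := (etaM A / (m : ℝ)) ^ ((1 : ℝ) / 3)

/-- `λ_{1,A} = (1/n)Σ_{i,j} â_{ij}³`. -/
noncomputable def lam1 (A : Matrix (Fin m) (Fin m) ℝ) : ℝ := (∑ i, ∑ j, hatM A i j ^ 3) / (m : ℝ)

/-- `λ_{2,A}`. -/
noncomputable def lam2 (A : Matrix (Fin m) (Fin m) ℝ) : ℝ :=
  (∑ i, ∑ j, hatM A i j ^ 4) / (m : ℝ) + 3 / (m : ℝ)
    - 3 / (m : ℝ) ^ 2 *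
        ∑ i, ∑ j, ∑ k, (hatM A i j ^ 2 * hatM A i k ^ 2 + hatM A i j ^ 2 * hatM A k j ^ 2)

/-- First-order Edgeworth expansion `e_{1,A}`. -/
noncomputable def edge1 (A : Matrix (Fin m) (Fin m) ℝ) (x : ℝ) : ℝ :=
  gaussCDF x - gaussD x * (lam1 A / 6) * (x ^ 2 - 1)

/-- Second-order Edgeworth expansion `e_{2,A}`. -/
noncomputable def edge2 (A : Matrix (Fin m) (Fin m) ℝ) (x : ℝ) : ℝ :=
  gaussCDF x - gaussD x *
    (lam1 A / 6 * (x ^ 2 - 1) + lam2 A / 24 * (x ^ 3 - 3 * x)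
      + lam1 A ^ 2 / 72 * (x ^ 5 - 10 * x ^ 3 + 15 * x))

/-- `k`-th iterated difference `Δ_y^k G`. -/
noncomputable def Δiter (y : ℝ) (k : ℕ) (G : ℝ → ℝ) : ℝ → ℝ :=
  (fun (G : ℝ → ℝ) (z : ℝ) => G (z + y) - G z)^[k] G

/-- The interpolating polynomial `P_y^k(x; z, F)` of `F` at the points `z, z+y, …, z+ky`. -/
noncomputable def interp (y : ℝ) (k : ℕ) (z : ℝ) (F : ℝ → ℝ) (x : ℝ) : ℝ :=
  F z + ∑ s ∈ Finset.Icc 1 k,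
    Δiter y s F z * ∏ i ∈ Finset.Icc 1 s, (x - z - ((i : ℝ) - 1) * y) / ((i : ℝ) * y)

end RankDefs


lemma orbit_avg {G α : Type*} [Group G] [Fintype G] [MulAction G α] (O : Finset α)
    (hO : ∀ (g : G) (x : α), x ∈ O → g • x ∈ O)
    (ht : ∀ x ∈ O, ∀ y ∈ O, ∃ g : G, g • x = y) (h : α → α → ℝ) :
    (O.card : ℝ) * ∑ g : G, ∑ x ∈ O, h x (g • x)
      = (Fintype.card G : ℝ) * ∑ x ∈ O, ∑ y ∈ O, h x y := by
  have key : ∀ (φ : α → ℝ), ∀ x ∈ O,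
      (O.card : ℝ) * ∑ g : G, φ (g • x) = (Fintype.card G : ℝ) * ∑ y ∈ O, φ y := by
    intro φ x hx
    have h1 : ∀ y ∈ O, ∑ g : G, φ (g • y) = ∑ g : G, φ (g • x) := by
      intro y hy
      obtain ⟨k, hk⟩ := ht x hx y hy
      rw [← hk, ← Equiv.sum_comp (Equiv.mulRight k) (fun g => φ (g • x))]
      simp [mul_smul]
    have h2 : ∀ g : G, ∑ y ∈ O, φ (g • y) = ∑ y ∈ O, φ y := by
      intro g
      refine Finset.sum_nbij' (fun y => g • y) (fun y => g⁻¹ • y) ?_ ?_ ?_ ?_ ?_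
      · intro y hy; exact hO g y hy
      · intro y hy; exact hO _ y hy
      · intro y _; simp
      · intro y _; simp
      · intro y _; rfl
    calc (O.card : ℝ) * ∑ g : G, φ (g • x) = ∑ y ∈ O, ∑ g : G, φ (g • y) := by
          rw [Finset.sum_congr rfl h1]; simp
      _ = ∑ g : G, ∑ y ∈ O, φ (g • y) := Finset.sum_comm
      _ = _ := by simp [h2]
  rw [Finset.sum_comm, Finset.mul_sum, Finset.mul_sum]
  exact Finset.sum_congr rfl fun x hx => key (h x) x hx

/-- ordered pairs of distinct indices -/
def O2 (n : ℕ) : Finset (Fin n × Fin n) := univ.filter fun x => x.1 ≠ x.2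

/-- ordered triples of distinct indices -/
def O3 (n : ℕ) : Finset (Fin n × Fin n × Fin n) :=
  univ.filter fun x => x.1 ≠ x.2.1 ∧ x.1 ≠ x.2.2 ∧ x.2.1 ≠ x.2.2

/-- ordered quadruples of distinct indices -/
def O4 (n : ℕ) : Finset (Fin n × Fin n × Fin n × Fin n) :=
  univ.filter fun x => (x.1 ≠ x.2.1 ∧ x.1 ≠ x.2.2.1 ∧ x.2.1 ≠ x.2.2.1) ∧
    x.1 ≠ x.2.2.2 ∧ x.2.1 ≠ x.2.2.2 ∧ x.2.2.1 ≠ x.2.2.2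

lemma sum_O2 {n : ℕ} (u v : Fin n → ℝ) :
    ∑ x ∈ O2 n, u x.1 * v x.2 = (∑ i, u i) * (∑ i, v i) - ∑ i, u i * v i := by
  have h : ∀ i j, (if i ≠ j then u i * v j else 0) = u i * v j - if i = j then u i * v j else 0 := by
    intro i j; by_cases h : i = j <;> simp [h]
  rw [O2, Finset.sum_filter, Fintype.sum_prod_type]
  simp only [h, Finset.sum_sub_distrib, Finset.sum_ite_eq, Finset.mem_univ, if_true,
    Finset.sum_mul_sum]

lemma sum_O3 {n : ℕ} (u v w : Fin n → ℝ) :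
    ∑ x ∈ O3 n, u x.1 * v x.2.1 * w x.2.2 =
      (∑ i, u i) * (∑ i, v i) * (∑ i, w i) - (∑ i, u i * v i) * (∑ i, w i)
      - (∑ i, u i * w i) * (∑ i, v i) - (∑ i, u i) * (∑ i, v i * w i)
      + 2 * ∑ i, u i * v i * w i := by
  have h : ∀ i j k, (if i ≠ j ∧ i ≠ k ∧ j ≠ k then u i * v j * w k else 0)
     = (if i ≠ j then (u i * v j) * w k else 0) - (if i = k then if i ≠ j then u i * v j * w k else 0 else 0)
      - (if j = k then if i ≠ j then u i * v j * w k else 0 else 0) := by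
    intro i j k
    by_cases h1 : i = j <;> by_cases h2 : i = k <;> by_cases h3 : j = k <;> simp_all
  have e : ∑ x ∈ O3 n, u x.1 * v x.2.1 * w x.2.2 =
      (∑ x ∈ O2 n, u x.1 * v x.2) * (∑ i, w i) - (∑ x ∈ O2 n, (u x.1 * w x.1) * v x.2)
      - (∑ x ∈ O2 n, u x.1 * (v x.2 * w x.2)) := by
    rw [O3, O2]
    simp only [Finset.sum_filter, Fintype.sum_prod_type]
    simp only [h, Finset.sum_sub_distrib, Finset.sum_ite_eq, Finset.mem_univ, if_true,
      ]
    have t1 : ∀ i j : Fin n, (if i ≠ j then u i * v j * w i else 0)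
      = if i ≠ j then u i * w i * v j else 0 := by
        intro i j; split_ifs <;> ring
    have t2 : ∀ i j : Fin n, (if i ≠ j then u i * v j * w j else 0)
      = if i ≠ j then u i * (v j * w j) else 0 := by
        intro i j; split_ifs <;> ring
    have t3 : ∀ i j : Fin n, ∑ k, (if i ≠ j then u i * v j * w k else 0)
      = (if i ≠ j then u i * v j else 0) * ∑ k, w k := by
        intro i j; split_ifs <;> simp [Finset.mul_sum]
    simp only [t1, t2, t3, ← Finset.sum_mul]
  rw [e, sum_O2, sum_O2 (fun i => u i * w i) v, sum_O2 u (fun i => v i * w i)]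
  have t4 : ∀ i, u i * w i * v i = u i * v i * w i := fun i => by ring
  have t5 : ∀ i, u i * (v i * w i) = u i * v i * w i := fun i => by ring
  simp only [t4, t5]
  ring

lemma sum_O4 {n : ℕ} (u v w z : Fin n → ℝ) :
    ∑ x ∈ O4 n, u x.1 * v x.2.1 * w x.2.2.1 * z x.2.2.2 =
      (∑ x ∈ O3 n, u x.1 * v x.2.1 * w x.2.2) * (∑ i, z i)
      - (∑ x ∈ O3 n, (u x.1 * z x.1) * v x.2.1 * w x.2.2)
      - (∑ x ∈ O3 n, u x.1 * (v x.2.1 * z x.2.1) * w x.2.2)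
      - (∑ x ∈ O3 n, u x.1 * v x.2.1 * (w x.2.2 * z x.2.2)) := by
  have h : ∀ i j k l, (if (i ≠ j ∧ i ≠ k ∧ j ≠ k) ∧ i ≠ l ∧ j ≠ l ∧ k ≠ l then
        u i * v j * w k * z l else 0)
     = (if i ≠ j ∧ i ≠ k ∧ j ≠ k then u i * v j * w k * z l else 0)
      - (if i = l then if i ≠ j ∧ i ≠ k ∧ j ≠ k then u i * v j * w k * z l else 0 else 0)
      - (if j = l then if i ≠ j ∧ i ≠ k ∧ j ≠ k then u i * v j * w k * z l else 0 else 0)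
      - (if k = l then if i ≠ j ∧ i ≠ k ∧ j ≠ k then u i * v j * w k * z l else 0 else 0) := by
    intro i j k l
    by_cases h0 : i ≠ j ∧ i ≠ k ∧ j ≠ k
    · obtain ⟨a, b, c⟩ := h0
      by_cases h1 : i = l <;> by_cases h2 : j = l <;> by_cases h3 : k = l <;> simp_all
    · simp [h0]
  rw [O3, O4]
  simp only [Finset.sum_filter, Fintype.sum_prod_type]
  simp only [h, Finset.sum_sub_distrib, Finset.sum_ite_eq, Finset.mem_univ, if_true,
    ]
  have t1 : ∀ i j k : Fin n, (if i ≠ j ∧ i ≠ k ∧ j ≠ k then u i * v j * w k * z i else 0)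
      = if i ≠ j ∧ i ≠ k ∧ j ≠ k then u i * z i * v j * w k else 0 := by
    intro i j k; split_ifs <;> ring
  have t2 : ∀ i j k : Fin n, (if i ≠ j ∧ i ≠ k ∧ j ≠ k then u i * v j * w k * z j else 0)
      = if i ≠ j ∧ i ≠ k ∧ j ≠ k then u i * (v j * z j) * w k else 0 := by
    intro i j k; split_ifs <;> ring
  have t3 : ∀ i j k : Fin n, (if i ≠ j ∧ i ≠ k ∧ j ≠ k then u i * v j * w k * z k else 0)
      = if i ≠ j ∧ i ≠ k ∧ j ≠ k then u i * v j * (w k * z k) else 0 := by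
    intro i j k; split_ifs <;> ring
  have t4 : ∀ i j k : Fin n,
      ∑ l, (if i ≠ j ∧ i ≠ k ∧ j ≠ k then u i * v j * w k * z l else 0)
      = (if i ≠ j ∧ i ≠ k ∧ j ≠ k then u i * v j * w k else 0) * ∑ l, z l := by
    intro i j k; split_ifs <;> simp [Finset.mul_sum]
  simp only [t1, t2, t3, t4, ← Finset.sum_mul]

lemma sum_O4' {n : ℕ} (u v w z : Fin n → ℝ) :
    ∑ x ∈ O4 n, u x.1 * v x.2.1 * w x.2.2.1 * z x.2.2.2 =
      ((∑ i, u i) * (∑ i, v i) * (∑ i, w i) - (∑ i, u i * v i) * (∑ i, w i)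
      - (∑ i, u i * w i) * (∑ i, v i) - (∑ i, u i) * (∑ i, v i * w i)
      + 2 * ∑ i, u i * v i * w i) * (∑ i, z i)
      - ((∑ i, u i * z i) * (∑ i, v i) * (∑ i, w i) - (∑ i, u i * v i * z i) * (∑ i, w i)
      - (∑ i, u i * w i * z i) * (∑ i, v i) - (∑ i, u i * z i) * (∑ i, v i * w i))
      - ((∑ i, u i) * (∑ i, v i * z i) * (∑ i, w i) - (∑ i, u i * v i * z i) * (∑ i, w i)
      - (∑ i, u i * w i) * (∑ i, v i * z i) - (∑ i, u i) * (∑ i, v i * w i * z i))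
      - ((∑ i, u i) * (∑ i, v i) * (∑ i, w i * z i) - (∑ i, u i * v i) * (∑ i, w i * z i)
      - (∑ i, u i * w i * z i) * (∑ i, v i) - (∑ i, u i) * (∑ i, v i * w i * z i))
      - 6 * ∑ i, u i * v i * w i * z i := by
  rw [sum_O4, sum_O3, sum_O3 (fun i => u i * z i) v w, sum_O3 u (fun i => v i * z i) w,
    sum_O3 u v (fun i => w i * z i)]
  have t1 : ∀ i, u i * z i * v i = u i * v i * z i := fun i => by ring
  have t2 : ∀ i, u i * z i * w i = u i * w i * z i := fun i => by ring
  have t3 : ∀ i, u i * v i * z i * w i = u i * v i * w i * z i := fun i => by ring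
  have t4 : ∀ i, u i * (v i * z i) = u i * v i * z i := fun i => by ring
  have t5 : ∀ i, v i * z i * w i = v i * w i * z i := fun i => by ring
  have t6 : ∀ i, u i * (w i * z i) = u i * w i * z i := fun i => by ring
  have t7 : ∀ i, v i * (w i * z i) = v i * w i * z i := fun i => by ring
  have t8 : ∀ i, u i * v i * (w i * z i) = u i * v i * w i * z i := fun i => by ring
  simp only [t1, t2, t3, t4, t5, t6, t7, t8]
  ring

lemma card_O2 (n : ℕ) : ((O2 n).card : ℝ) = n * (n - 1) := by
  have := sum_O2 (n := n) (fun _ => 1) (fun _ => 1)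
  simp at this
  rw [this]; ring

lemma card_O3 (n : ℕ) : ((O3 n).card : ℝ) = n * (n - 1) * (n - 2) := by
  have := sum_O3 (n := n) (fun _ => 1) (fun _ => 1) (fun _ => 1)
  simp at this
  rw [this]; ring

lemma card_O4 (n : ℕ) : ((O4 n).card : ℝ) = n * (n - 1) * (n - 2) * (n - 3) := by
  have := sum_O4' (n := n) (fun _ => 1) (fun _ => 1) (fun _ => 1) (fun _ => 1)
  simp at this
  rw [this]; ring

lemma exists_perm {n k : ℕ} (x y : Fin k → Fin n) (hx : Function.Injective x)
    (hy : Function.Injective y) : ∃ g : Equiv.Perm (Fin n), ∀ a, g (x a) = y a := by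
  have := Equiv.Perm.isMultiplyPretransitive (Fin n) k
  obtain ⟨g, hg⟩ := MulAction.exists_smul_eq (Equiv.Perm (Fin n))
    (⟨x, hx⟩ : Fin k ↪ Fin n) ⟨y, hy⟩
  exact ⟨g, fun a => by simpa using DFunLike.congr_fun hg a⟩

lemma permExp_O2 {n : ℕ} (h : Fin n × Fin n → Fin n × Fin n → ℝ) :
    (n * (n - 1) : ℝ) * permExp (fun π : Equiv.Perm (Fin n) => ∑ x ∈ O2 n, h x (π x.1, π x.2))
      = ∑ x ∈ O2 n, ∑ y ∈ O2 n, h x y := by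
  have := orbit_avg (G := Equiv.Perm (Fin n)) (O2 n) (by
      rintro g ⟨a, b⟩; simp [O2]) (by
      rintro ⟨a, b⟩ hx ⟨c, d⟩ hy
      simp only [O2, Finset.mem_filter, Finset.mem_univ, true_and] at hx hy
      obtain ⟨g, hg⟩ := exists_perm ![a, b] ![c, d]
        (by intro i j; fin_cases i <;> fin_cases j <;> simp_all [eq_comm])
        (by intro i j; fin_cases i <;> fin_cases j <;> simp_all [eq_comm])
      exact ⟨g, by simpa [Fin.forall_fin_succ] using hg⟩) h
  rw [card_O2, Fintype.card_perm, Fintype.card_fin] at this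
  have hf : (n.factorial : ℝ) ≠ 0 := by positivity
  rw [permExp, mul_div_assoc', div_eq_iff hf, mul_comm (∑ x ∈ O2 n, _)]
  exact this

lemma permExp_O3 {n : ℕ} (h : Fin n × Fin n × Fin n → Fin n × Fin n × Fin n → ℝ) :
    (n * (n - 1) * (n - 2) : ℝ) *
      permExp (fun π : Equiv.Perm (Fin n) => ∑ x ∈ O3 n, h x (π x.1, π x.2.1, π x.2.2))
      = ∑ x ∈ O3 n, ∑ y ∈ O3 n, h x y := by
  have := orbit_avg (G := Equiv.Perm (Fin n)) (O3 n) (by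
      rintro g ⟨a, b, c⟩; simp [O3]) (by
      rintro ⟨a, b, c⟩ hx ⟨a', b', c'⟩ hy
      simp only [O3, Finset.mem_filter, Finset.mem_univ, true_and] at hx hy
      obtain ⟨g, hg⟩ := exists_perm ![a, b, c] ![a', b', c']
        (by intro i j; fin_cases i <;> fin_cases j <;> simp_all [eq_comm])
        (by intro i j; fin_cases i <;> fin_cases j <;> simp_all [eq_comm])
      exact ⟨g, by simpa [Fin.forall_fin_succ] using hg⟩) h
  rw [card_O3, Fintype.card_perm, Fintype.card_fin] at this
  have hf : (n.factorial : ℝ) ≠ 0 := by positivity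
  rw [permExp, mul_div_assoc', div_eq_iff hf, mul_comm (∑ x ∈ O3 n, _)]
  exact this

lemma permExp_O4 {n : ℕ}
    (h : Fin n × Fin n × Fin n × Fin n → Fin n × Fin n × Fin n × Fin n → ℝ) :
    (n * (n - 1) * (n - 2) * (n - 3) : ℝ) *
      permExp (fun π : Equiv.Perm (Fin n) =>
        ∑ x ∈ O4 n, h x (π x.1, π x.2.1, π x.2.2.1, π x.2.2.2))
      = ∑ x ∈ O4 n, ∑ y ∈ O4 n, h x y := by
  have := orbit_avg (G := Equiv.Perm (Fin n)) (O4 n) (by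
      rintro g ⟨a, b, c, d⟩; simp [O4]) (by
      rintro ⟨a, b, c, d⟩ hx ⟨a', b', c', d'⟩ hy
      simp only [O4, Finset.mem_filter, Finset.mem_univ, true_and] at hx hy
      obtain ⟨g, hg⟩ := exists_perm ![a, b, c, d] ![a', b', c', d']
        (by intro i j; fin_cases i <;> fin_cases j <;> simp_all [eq_comm])
        (by intro i j; fin_cases i <;> fin_cases j <;> simp_all [eq_comm])
      exact ⟨g, by simpa [Fin.forall_fin_succ] using hg⟩) h
  rw [card_O4, Fintype.card_perm, Fintype.card_fin] at this
  have hf : (n.factorial : ℝ) ≠ 0 := by positivity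
  rw [permExp, mul_div_assoc', div_eq_iff hf, mul_comm (∑ x ∈ O4 n, _)]
  exact this

lemma permExp_O1 {n : ℕ} (h : Fin n → Fin n → ℝ) :
    (n : ℝ) * permExp (fun π : Equiv.Perm (Fin n) => ∑ x, h x (π x))
      = ∑ x, ∑ y, h x y := by
  have := orbit_avg (G := Equiv.Perm (Fin n)) (univ : Finset (Fin n)) (by simp) (by
      intro x _ y _
      exact ⟨Equiv.swap x y, by simp⟩) h
  rw [Finset.card_univ, Fintype.card_perm, Fintype.card_fin] at this
  have hf : (n.factorial : ℝ) ≠ 0 := by positivity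
  rw [permExp, mul_div_assoc', div_eq_iff hf, mul_comm (∑ x, ∑ y, _)]
  exact this

lemma sum_O4_zero {n : ℕ} (u v w z : Fin n → ℝ) (hu : ∑ i, u i = 0) (hv : ∑ i, v i = 0)
    (hw : ∑ i, w i = 0) (hz : ∑ i, z i = 0) :
    ∑ x ∈ O4 n, u x.1 * v x.2.1 * w x.2.2.1 * z x.2.2.2 =
      (∑ i, u i * v i) * (∑ i, w i * z i) + (∑ i, u i * w i) * (∑ i, v i * z i)
      + (∑ i, u i * z i) * (∑ i, v i * w i) - 6 * ∑ i, u i * v i * w i * z i := by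
  rw [sum_O4', hu, hv, hw, hz]; ring

lemma sum_O3_zero {n : ℕ} (u v w : Fin n → ℝ) (hv : ∑ i, v i = 0) (hw : ∑ i, w i = 0) :
    ∑ x ∈ O3 n, u x.1 * v x.2.1 * w x.2.2 =
      2 * (∑ i, u i * v i * w i) - (∑ i, u i) * (∑ i, v i * w i) := by
  rw [sum_O3, hv, hw]; ring

section Moments

variable {n : ℕ} (b : Fin n → Fin n → ℝ)

lemma M4_eq (hr : ∀ i, ∑ j, b i j = 0) (hc : ∀ j, ∑ i, b i j = 0) :
    ∑ x ∈ O4 n, ∑ y ∈ O4 n, b x.1 y.1 * b x.2.1 y.2.1 * b x.2.2.1 y.2.2.1 * b x.2.2.2 y.2.2.2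
      = 3 * (∑ i, ∑ j, b i j ^ 2) ^ 2 + 6 * (∑ j, ∑ k, (∑ i, b i j * b i k) ^ 2)
        - 18 * (∑ i, (∑ j, b i j ^ 2) ^ 2) - 18 * (∑ j, (∑ i, b i j ^ 2) ^ 2)
        + 36 * ∑ i, ∑ j, b i j ^ 4 := by
  have h1 : ∀ x : Fin n × Fin n × Fin n × Fin n,
      ∑ y ∈ O4 n, b x.1 y.1 * b x.2.1 y.2.1 * b x.2.2.1 y.2.2.1 * b x.2.2.2 y.2.2.2
      = (∑ j, ∑ k, b x.1 j * b x.2.1 j * b x.2.2.1 k * b x.2.2.2 k)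
      + (∑ j, ∑ k, b x.1 j * b x.2.1 k * b x.2.2.1 j * b x.2.2.2 k)
      + (∑ j, ∑ k, b x.1 j * b x.2.1 k * b x.2.2.1 k * b x.2.2.2 j)
      - 6 * ∑ j, b x.1 j * b x.2.1 j * b x.2.2.1 j * b x.2.2.2 j := by
    intro x
    rw [sum_O4_zero _ _ _ _ (hr _) (hr _) (hr _) (hr _)]
    simp only [Finset.sum_mul_sum]
    congr 1
    congr 1
    congr 1
    all_goals
      refine Finset.sum_congr rfl fun j _ => Finset.sum_congr rfl fun k _ => ?_
      ring
  simp only [h1, Finset.sum_sub_distrib, Finset.sum_add_distrib, ← Finset.mul_sum]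
  have sw : ∀ f : Fin n × Fin n × Fin n × Fin n → Fin n → Fin n → ℝ,
      ∑ x ∈ O4 n, ∑ j, ∑ k, f x j k = ∑ j, ∑ k, ∑ x ∈ O4 n, f x j k := by
    intro f
    rw [Finset.sum_comm]
    exact Finset.sum_congr rfl fun j _ => Finset.sum_comm
  rw [sw, sw, sw, Finset.sum_comm (s := O4 n)]
  have e1 : ∀ j k, ∑ x ∈ O4 n, b x.1 j * b x.2.1 j * b x.2.2.1 k * b x.2.2.2 k
      = (∑ i, b i j ^ 2) * (∑ i, b i k ^ 2) + 2 * (∑ i, b i j * b i k) ^ 2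
        - 6 * ∑ i, b i j ^ 2 * b i k ^ 2 := by
    intro j k
    rw [sum_O4_zero (fun i => b i j) (fun i => b i j) (fun i => b i k) (fun i => b i k)
      (hc _) (hc _) (hc _) (hc _)]
    have t : ∀ i, b i j * b i j * b i k * b i k = b i j ^ 2 * b i k ^ 2 := fun i => by ring
    simp only [t]; simp only [← pow_two]; ring
  have e2 : ∀ j k, ∑ x ∈ O4 n, b x.1 j * b x.2.1 k * b x.2.2.1 j * b x.2.2.2 k
      = (∑ i, b i j ^ 2) * (∑ i, b i k ^ 2) + 2 * (∑ i, b i j * b i k) ^ 2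
        - 6 * ∑ i, b i j ^ 2 * b i k ^ 2 := by
    intro j k
    rw [sum_O4_zero (fun i => b i j) (fun i => b i k) (fun i => b i j) (fun i => b i k)
      (hc _) (hc _) (hc _) (hc _)]
    have t : ∀ i, b i j * b i k * b i j * b i k = b i j ^ 2 * b i k ^ 2 := fun i => by ring
    have t2 : ∀ i, b i k * b i j = b i j * b i k := fun i => by ring
    simp only [t, t2]; simp only [← pow_two]; ring
  have e3 : ∀ j k, ∑ x ∈ O4 n, b x.1 j * b x.2.1 k * b x.2.2.1 k * b x.2.2.2 j
      = (∑ i, b i j ^ 2) * (∑ i, b i k ^ 2) + 2 * (∑ i, b i j * b i k) ^ 2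
        - 6 * ∑ i, b i j ^ 2 * b i k ^ 2 := by
    intro j k
    rw [sum_O4_zero (fun i => b i j) (fun i => b i k) (fun i => b i k) (fun i => b i j)
      (hc _) (hc _) (hc _) (hc _)]
    have t : ∀ i, b i j * b i k * b i k * b i j = b i j ^ 2 * b i k ^ 2 := fun i => by ring
    have t2 : ∀ i, b i k * b i j = b i j * b i k := fun i => by ring
    simp only [t, t2]; simp only [← pow_two]; ring
  have e4 : ∀ j, ∑ x ∈ O4 n, b x.1 j * b x.2.1 j * b x.2.2.1 j * b x.2.2.2 j
      = 3 * (∑ i, b i j ^ 2) ^ 2 - 6 * ∑ i, b i j ^ 4 := by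
    intro j
    rw [sum_O4_zero (fun i => b i j) (fun i => b i j) (fun i => b i j) (fun i => b i j)
      (hc _) (hc _) (hc _) (hc _)]
    have t : ∀ i, b i j * b i j * b i j * b i j = b i j ^ 4 := fun i => by ring
    simp only [t]; simp only [← pow_two]; ring
  simp only [e4]
  simp only [e1, e2, e3, Finset.sum_sub_distrib, Finset.sum_add_distrib, ← Finset.mul_sum]
  have f1 : ∑ j, (∑ i, b i j ^ 2) * ∑ k, ∑ i, b i k ^ 2 = (∑ i, ∑ j, b i j ^ 2) ^ 2 := by
    rw [← Finset.sum_mul, Finset.sum_comm, pow_two]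
  have f2 : ∑ j, ∑ k, ∑ i, b i j ^ 2 * b i k ^ 2 = ∑ i, (∑ j, b i j ^ 2) ^ 2 := by
    rw [Finset.sum_congr rfl fun j _ => Finset.sum_comm, Finset.sum_comm]
    refine Finset.sum_congr rfl fun i _ => ?_
    rw [pow_two, Finset.sum_mul_sum]
  have f3 : ∑ j, ∑ i, b i j ^ 4 = ∑ i, ∑ j, b i j ^ 4 := Finset.sum_comm
  rw [f1, f2, f3]
  ring

lemma M211_eq (hr : ∀ i, ∑ j, b i j = 0) (hc : ∀ j, ∑ i, b i j = 0) :
    ∑ x ∈ O3 n, ∑ y ∈ O3 n, b x.1 y.1 ^ 2 * b x.2.1 y.2.1 * b x.2.2 y.2.2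
      = (∑ i, ∑ j, b i j ^ 2) ^ 2 
        - 2 * (∑ i, (∑ j, b i j ^ 2) ^ 2) - 2 * (∑ j, (∑ i, b i j ^ 2) ^ 2)
        + 4 * ∑ i, ∑ j, b i j ^ 4 := by
  have h1 : ∀ x : Fin n × Fin n × Fin n,
      ∑ y ∈ O3 n, b x.1 y.1 ^ 2 * b x.2.1 y.2.1 * b x.2.2 y.2.2
      = 2 * (∑ j, b x.1 j ^ 2 * b x.2.1 j * b x.2.2 j)
      - (∑ j, ∑ k, b x.1 j ^ 2 * b x.2.1 k * b x.2.2 k) := by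
    intro x
    rw [sum_O3_zero (fun j => b x.1 j ^ 2) _ _ (hr _) (hr _), Finset.sum_mul_sum]
    simp only [mul_assoc]
  simp only [h1, Finset.sum_sub_distrib, ← Finset.mul_sum]
  have sw : ∀ f : Fin n × Fin n × Fin n → Fin n → Fin n → ℝ,
      ∑ x ∈ O3 n, ∑ j, ∑ k, f x j k = ∑ j, ∑ k, ∑ x ∈ O3 n, f x j k := by
    intro f
    rw [Finset.sum_comm]
    exact Finset.sum_congr rfl fun j _ => Finset.sum_comm
  rw [sw, Finset.sum_comm (s := O3 n)]
  have e1 : ∀ j k, ∑ x ∈ O3 n, b x.1 j ^ 2 * b x.2.1 k * b x.2.2 k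
      = 2 * (∑ i, b i j ^ 2 * b i k ^ 2) - (∑ i, b i j ^ 2) * (∑ i, b i k ^ 2) := by
    intro j k
    rw [sum_O3_zero (fun i => b i j ^ 2) (fun i => b i k) (fun i => b i k) (hc _) (hc _)]
    have t : ∀ i, b i j ^ 2 * b i k * b i k = b i j ^ 2 * b i k ^ 2 := fun i => by ring
    simp only [t]; simp only [← pow_two]
  have f1 : ∑ j, (∑ i, b i j ^ 2) * ∑ k, ∑ i, b i k ^ 2 = (∑ i, ∑ j, b i j ^ 2) ^ 2 := by
    rw [← Finset.sum_mul, Finset.sum_comm, pow_two]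
  have f2 : ∑ j, ∑ k, ∑ i, b i j ^ 2 * b i k ^ 2 = ∑ i, (∑ j, b i j ^ 2) ^ 2 := by
    rw [Finset.sum_congr rfl fun j _ => Finset.sum_comm, Finset.sum_comm]
    refine Finset.sum_congr rfl fun i _ => ?_
    rw [pow_two, Finset.sum_mul_sum]
  have f3 : ∑ j, ∑ i, b i j ^ 4 = ∑ i, ∑ j, b i j ^ 4 := Finset.sum_comm
  have t4 : ∀ i j, b i j ^ 2 * b i j ^ 2 = b i j ^ 4 := fun i j => by ring
  simp only [e1, Finset.sum_sub_distrib, ← Finset.mul_sum, t4, ← pow_two]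
  simp only [f1, f2, f3]
  ring

lemma M111_eq (hr : ∀ i, ∑ j, b i j = 0) (hc : ∀ j, ∑ i, b i j = 0) :
    ∑ x ∈ O3 n, ∑ y ∈ O3 n, b x.1 y.1 * b x.2.1 y.2.1 * b x.2.2 y.2.2
      = 4 * ∑ i, ∑ j, b i j ^ 3 := by
  have h1 : ∀ x : Fin n × Fin n × Fin n,
      ∑ y ∈ O3 n, b x.1 y.1 * b x.2.1 y.2.1 * b x.2.2 y.2.2
      = 2 * (∑ j, b x.1 j * b x.2.1 j * b x.2.2 j) := by
    intro x
    rw [sum_O3_zero (fun j => b x.1 j) _ _ (hr _) (hr _), hr]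
    ring
  have e1 : ∀ j, ∑ x ∈ O3 n, b x.1 j * b x.2.1 j * b x.2.2 j = 2 * (∑ i, b i j ^ 3) := by
    intro j
    rw [sum_O3_zero (fun i => b i j) (fun i => b i j) (fun i => b i j) (hc _) (hc _), hc]
    have t : ∀ i, b i j * b i j * b i j = b i j ^ 3 := fun i => by ring
    simp only [t]; ring
  have f3 : ∑ j, ∑ i, b i j ^ 3 = ∑ i, ∑ j, b i j ^ 3 := Finset.sum_comm
  simp only [h1, ← Finset.mul_sum]
  rw [Finset.sum_comm (s := O3 n)]
  simp only [e1, ← Finset.mul_sum, f3]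
  ring

lemma M2_one (hr : ∀ i, ∑ j, b i j = 0) (hc : ∀ j, ∑ i, b i j = 0) (m : ℕ) :
    ∑ x ∈ O2 n, ∑ y ∈ O2 n, b x.1 y.1 ^ m * b x.2 y.2 = ∑ i, ∑ j, b i j ^ (m + 1) := by
  have h1 : ∀ x : Fin n × Fin n, ∑ y ∈ O2 n, b x.1 y.1 ^ m * b x.2 y.2
      = - ∑ j, b x.1 j ^ m * b x.2 j := by
    intro x
    rw [sum_O2 (fun j => b x.1 j ^ m), hr]; ring
  have e1 : ∀ j, ∑ x ∈ O2 n, b x.1 j ^ m * b x.2 j = - ∑ i, b i j ^ (m + 1) := by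
    intro j
    rw [sum_O2 (fun i => b i j ^ m) (fun i => b i j), hc]
    simp [pow_succ]
  simp only [h1, Finset.sum_neg_distrib]
  rw [Finset.sum_comm (s := O2 n)]
  simp only [e1, Finset.sum_neg_distrib, neg_neg]
  exact Finset.sum_comm

lemma M22_eq :
    ∑ x ∈ O2 n, ∑ y ∈ O2 n, b x.1 y.1 ^ 2 * b x.2 y.2 ^ 2
      = (∑ i, ∑ j, b i j ^ 2) ^ 2
        - (∑ i, (∑ j, b i j ^ 2) ^ 2) - (∑ j, (∑ i, b i j ^ 2) ^ 2)
        + ∑ i, ∑ j, b i j ^ 4 := by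
  have h1 : ∀ x : Fin n × Fin n, ∑ y ∈ O2 n, b x.1 y.1 ^ 2 * b x.2 y.2 ^ 2
      = (∑ j, b x.1 j ^ 2) * (∑ j, b x.2 j ^ 2) - ∑ j, b x.1 j ^ 2 * b x.2 j ^ 2 := by
    intro x
    rw [sum_O2 (fun j => b x.1 j ^ 2) (fun j => b x.2 j ^ 2)]
  have e1 : ∀ j, ∑ x ∈ O2 n, b x.1 j ^ 2 * b x.2 j ^ 2
      = (∑ i, b i j ^ 2) ^ 2 - ∑ i, b i j ^ 4 := by
    intro j
    rw [sum_O2 (fun i => b i j ^ 2) (fun i => b i j ^ 2)]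
    simp only [← pow_two, ← pow_mul]; norm_num
  simp only [h1, Finset.sum_sub_distrib]
  rw [Finset.sum_comm (s := O2 n),
    sum_O2 (fun i => ∑ j, b i j ^ 2) (fun i => ∑ j, b i j ^ 2)]
  simp only [e1, Finset.sum_sub_distrib, ← pow_two]
  have f3 : ∑ j, ∑ i, b i j ^ 4 = ∑ i, ∑ j, b i j ^ 4 := Finset.sum_comm
  rw [f3]; ring

lemma pow3_expand (x : Fin n → ℝ) :
    (∑ i, x i) ^ 3 = (∑ t ∈ O3 n, x t.1 * x t.2.1 * x t.2.2) + 3 * (∑ t ∈ O2 n, x t.1 ^ 2 * x t.2)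
      + ∑ i, x i ^ 3 := by
  rw [sum_O3, sum_O2 (fun i => x i ^ 2) x]
  have t2 : ∀ i, x i ^ 2 = x i * x i := fun i => by ring
  have t3 : ∀ i, x i ^ 3 = x i * x i * x i := fun i => by ring
  simp only [t2, t3]; ring

lemma pow4_expand (x : Fin n → ℝ) :
    (∑ i, x i) ^ 4 = (∑ t ∈ O4 n, x t.1 * x t.2.1 * x t.2.2.1 * x t.2.2.2)
      + 6 * (∑ t ∈ O3 n, x t.1 ^ 2 * x t.2.1 * x t.2.2)
      + 3 * (∑ t ∈ O2 n, x t.1 ^ 2 * x t.2 ^ 2) + 4 * (∑ t ∈ O2 n, x t.1 ^ 3 * x t.2)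
      + ∑ i, x i ^ 4 := by
  rw [sum_O4', sum_O3 (fun i => x i ^ 2) x x, sum_O2 (fun i => x i ^ 2) (fun i => x i ^ 2),
    sum_O2 (fun i => x i ^ 3) x]
  have t2 : ∀ i, x i * x i = x i ^ 2 := fun i => by ring
  have t3 : ∀ i, x i ^ 2 * x i = x i ^ 3 := fun i => by ring
  have t4 : ∀ i, x i ^ 3 * x i = x i ^ 4 := fun i => by ring
  have t5 : ∀ i, x i ^ 2 * x i ^ 2 = x i ^ 4 := fun i => by ring
  simp only [t2, t3, t4, t5]; ring

lemma permExp_add (f g : Equiv.Perm (Fin n) → ℝ) :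
    permExp (fun π => f π + g π) = permExp f + permExp g := by
  simp only [permExp, Finset.sum_add_distrib, add_div]

lemma permExp_mul (c : ℝ) (f : Equiv.Perm (Fin n) → ℝ) :
    permExp (fun π => c * f π) = c * permExp f := by
  simp only [permExp, ← Finset.mul_sum, mul_div_assoc]

lemma third_moment (hn : 3 ≤ n) (hr : ∀ i, ∑ j, b i j = 0) (hc : ∀ j, ∑ i, b i j = 0) :
    permExp (fun π : Equiv.Perm (Fin n) => (∑ i, b i (π i)) ^ 3)
      = n / ((n - 1) * (n - 2)) * ∑ i, ∑ j, b i j ^ 3 := by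
  simp only [pow3_expand, permExp_add, permExp_mul]
  have a1 := permExp_O1 (fun i j => b i j ^ 3)
  have a2 := permExp_O2 (fun x y : Fin n × Fin n => b x.1 y.1 ^ 2 * b x.2 y.2)
  have a3 := permExp_O3 (fun x y : Fin n × Fin n × Fin n =>
    b x.1 y.1 * b x.2.1 y.2.1 * b x.2.2 y.2.2)
  rw [M2_one b hr hc 2] at a2
  rw [M111_eq b hr hc] at a3
  have hn' : (3 : ℝ) ≤ n := by exact_mod_cast hn
  have p0 : (n : ℝ) ≠ 0 := by linarith
  have p1 : (n : ℝ) - 1 ≠ 0 := by linarith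
  have p2 : (n : ℝ) - 2 ≠ 0 := by linarith
  rw [mul_comm, ← eq_div_iff (by positivity)] at a1 a2 a3
  simp only at a1 a2 a3
  rw [a1, a2, a3]
  field_simp
  ring

lemma fourth_moment (hn : 4 ≤ n) (hr : ∀ i, ∑ j, b i j = 0) (hc : ∀ j, ∑ i, b i j = 0)
    {N R C G F : ℝ} (hN : N = ∑ i, ∑ j, b i j ^ 2) (hR : R = ∑ i, (∑ j, b i j ^ 2) ^ 2)
    (hC : C = ∑ j, (∑ i, b i j ^ 2) ^ 2) (hG : G = ∑ j, ∑ k, (∑ i, b i j * b i k) ^ 2)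
    (hF : F = ∑ i, ∑ j, b i j ^ 4) :
    permExp (fun π : Equiv.Perm (Fin n) => (∑ i, b i (π i)) ^ 4)
      = (3 * N ^ 2 + 6 * G - 18 * R - 18 * C + 36 * F) / (n * (n - 1) * (n - 2) * (n - 3))
        + 6 * ((N ^ 2 - 2 * R - 2 * C + 4 * F) / (n * (n - 1) * (n - 2)))
        + 3 * ((N ^ 2 - R - C + F) / (n * (n - 1))) + 4 * (F / (n * (n - 1))) + F / n := by
  simp only [pow4_expand, permExp_add, permExp_mul]
  have a1 := permExp_O1 (fun i j => b i j ^ 4)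
  have a2 := permExp_O2 (fun x y : Fin n × Fin n => b x.1 y.1 ^ 2 * b x.2 y.2 ^ 2)
  have a2' := permExp_O2 (fun x y : Fin n × Fin n => b x.1 y.1 ^ 3 * b x.2 y.2)
  have a3 := permExp_O3 (fun x y : Fin n × Fin n × Fin n =>
    b x.1 y.1 ^ 2 * b x.2.1 y.2.1 * b x.2.2 y.2.2)
  have a4 := permExp_O4 (fun x y : Fin n × Fin n × Fin n × Fin n =>
    b x.1 y.1 * b x.2.1 y.2.1 * b x.2.2.1 y.2.2.1 * b x.2.2.2 y.2.2.2)
  rw [M2_one b hr hc 3] at a2'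
  rw [M22_eq b] at a2
  rw [M211_eq b hr hc] at a3
  rw [M4_eq b hr hc] at a4
  rw [← hF] at a1 a2'
  rw [← hN, ← hR, ← hC, ← hF] at a2 a3 a4
  rw [← hG] at a4
  have hn' : (4 : ℝ) ≤ n := by exact_mod_cast hn
  have p0 : (n : ℝ) ≠ 0 := by linarith
  have p1 : (n : ℝ) - 1 ≠ 0 := by linarith
  have p2 : (n : ℝ) - 2 ≠ 0 := by linarith
  have p3 : (n : ℝ) - 3 ≠ 0 := by linarith
  rw [mul_comm, ← eq_div_iff (by positivity)] at a1 a2 a2' a3 a4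
  simp only at a1 a2 a2' a3 a4
  rw [a1, a2, a2', a3, a4]

end Moments

lemma poly_upper (n : ℝ) (hn : 4 ≤ n) :
    3 * (n - 1) * n ^ 2 + 6 * n ^ 2 + 36 + 24 * (n - 3) + 7 * ((n - 2) * (n - 3))
      + (n - 1) * (n - 2) * (n - 3) ≤ 97 * ((n - 1) * (n - 2) * (n - 3)) := by
  obtain ⟨m, rfl⟩ : ∃ m, n = m + 4 := ⟨n - 4, by ring⟩
  have hm : 0 ≤ m := by linarith
  rw [← sub_nonneg]
  ring_nf
  positivity

lemma poly_lower (n : ℝ) (hn : 4 ≤ n) :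
    2 * n * (18 + 12 * (n - 3) + 3 * ((n - 2) * (n - 3))) ≤ 97 * ((n - 1) * (n - 2) * (n - 3)) := by
  obtain ⟨m, rfl⟩ : ∃ m, n = m + 4 := ⟨n - 4, by ring⟩
  have hm : 0 ≤ m := by linarith
  rw [← sub_nonneg]
  ring_nf
  positivity

lemma fourth_bound (n N R C G F : ℝ) (hn : 4 ≤ n) (hN : N = n - 1) (hF : 0 ≤ F)
    (hR : 0 ≤ R) (hC : 0 ≤ C) (hG : 0 ≤ G) (hNF : N ^ 2 ≤ n ^ 2 * F) (hRF : R ≤ n * F)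
    (hCF : C ≤ n * F) (hGN : G ≤ N ^ 2) :
    |(3 * N ^ 2 + 6 * G - 18 * R - 18 * C + 36 * F) / (n * (n - 1) * (n - 2) * (n - 3))
        + 6 * ((N ^ 2 - 2 * R - 2 * C + 4 * F) / (n * (n - 1) * (n - 2)))
        + 3 * ((N ^ 2 - R - C + F) / (n * (n - 1))) + 4 * (F / (n * (n - 1))) + F / n - 3|
      ≤ 97 * F / n := by
  have p0 : 0 < n := by linarith
  have p1 : 0 < n - 1 := by linarith
  have p2 : 0 < n - 2 := by linarith
  have p3 : 0 < n - 3 := by linarith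
  have e : (3 * N ^ 2 + 6 * G - 18 * R - 18 * C + 36 * F) / (n * (n - 1) * (n - 2) * (n - 3))
        + 6 * ((N ^ 2 - 2 * R - 2 * C + 4 * F) / (n * (n - 1) * (n - 2)))
        + 3 * ((N ^ 2 - R - C + F) / (n * (n - 1))) + 4 * (F / (n * (n - 1))) + F / n - 3
      = (3 * (n - 1) * (n ^ 2 - 2 * n - 1) + 6 * G
         + (36 + 24 * (n - 3) + 7 * ((n - 2) * (n - 3)) + (n - 1) * (n - 2) * (n - 3)) * F
         - (18 + 12 * (n - 3) + 3 * ((n - 2) * (n - 3))) * (R + C))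
        / (n * ((n - 1) * (n - 2) * (n - 3))) := by
    rw [hN]
    field_simp
    ring
  have e2 : 97 * F / n = 97 * ((n - 1) * (n - 2) * (n - 3)) * F
      / (n * ((n - 1) * (n - 2) * (n - 3))) := by
    field_simp
  have pp : 0 < n * ((n - 1) * (n - 2) * (n - 3)) := by positivity
  rw [e, e2, abs_div, abs_of_pos pp]
  refine div_le_div_of_nonneg_right ?_ pp.le
  have c0 : 0 ≤ 18 + 12 * (n - 3) + 3 * ((n - 2) * (n - 3)) := by positivity
  have c1 : 0 ≤ 36 + 24 * (n - 3) + 7 * ((n - 2) * (n - 3)) + (n - 1) * (n - 2) * (n - 3) := by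
    positivity
  have k0 : 0 ≤ 3 * (n - 1) * (n ^ 2 - 2 * n - 1) := by
    have : 0 ≤ n ^ 2 - 2 * n - 1 := by nlinarith
    positivity
  have k1 : 3 * (n - 1) * (n ^ 2 - 2 * n - 1) ≤ 3 * (n - 1) * (n ^ 2 * F) := by
    apply mul_le_mul_of_nonneg_left _ (by positivity)
    rw [hN] at hNF; nlinarith
  have u := mul_le_mul_of_nonneg_right (poly_upper n hn) hF
  have l := mul_le_mul_of_nonneg_right (poly_lower n hn) hF
  have s0 : 0 ≤ (18 + 12 * (n - 3) + 3 * ((n - 2) * (n - 3))) * (R + C) := by positivity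
  have s1 : (18 + 12 * (n - 3) + 3 * ((n - 2) * (n - 3))) * (R + C)
      ≤ (18 + 12 * (n - 3) + 3 * ((n - 2) * (n - 3))) * (2 * n * F) :=
    mul_le_mul_of_nonneg_left (by linarith) c0
  have t0 := mul_nonneg c1 hF
  rw [abs_le]
  constructor <;> linarith

section Final

variable {n : ℕ} (A : Matrix (Fin n) (Fin n) ℝ)

lemma ctr_row (hn : (n : ℝ) ≠ 0) (i : Fin n) : ∑ j, ctr A i j = 0 := by
  simp only [ctr, rowMean, colMean, totMean, Finset.sum_add_distrib, Finset.sum_sub_distrib,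
    ← Finset.sum_div, Finset.sum_const, Finset.card_univ, Fintype.card_fin, nsmul_eq_mul]
  rw [Finset.sum_comm (f := fun j i => A i j)]
  field_simp
  ring

lemma ctr_col (hn : (n : ℝ) ≠ 0) (j : Fin n) : ∑ i, ctr A i j = 0 := by
  simp only [ctr, rowMean, colMean, totMean, Finset.sum_add_distrib, Finset.sum_sub_distrib,
    ← Finset.sum_div, Finset.sum_const, Finset.card_univ, Fintype.card_fin, nsmul_eq_mul]
  field_simp
  ring

lemma rankTstd_eq (hn : (n : ℝ) ≠ 0) (π : Equiv.Perm (Fin n)) :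
    rankTstd A π = ∑ i, hatM A i (π i) := by
  simp only [rankTstd, hatM, ← Finset.sum_div]
  congr 1
  simp only [ctr, rankT, muM, Finset.sum_add_distrib, Finset.sum_sub_distrib,
    Finset.sum_const, Finset.card_univ, Fintype.card_fin, nsmul_eq_mul]
  rw [Equiv.sum_comp π (fun j => colMean A j)]
  simp only [rowMean, colMean, totMean, ← Finset.sum_div]
  rw [Finset.sum_comm (f := fun j i => A i j)]
  field_simp
  ring

lemma hat_sq (hn : (n : ℝ) - 1 ≠ 0) (hA : 0 < sdev A) :
    ∑ i, ∑ j, hatM A i j ^ 2 = n - 1 := by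
  have hs : 0 < sigma2 A := Real.sqrt_pos.mp hA
  have h2 : sdev A ^ 2 = sigma2 A := Real.sq_sqrt hs.le
  simp only [hatM, div_pow, ← Finset.sum_div, h2]
  rw [div_eq_iff hs.ne', sigma2]
  field_simp

end Final

/-- `|E(𝒯_A³)| ≤ 5β_A/n` for `n ≥ 3` and `|E(𝒯_A⁴) − 3| ≤ 97δ_A/n` for `n ≥ 4`. -/
theorem rank_statistic_moment_bounds (n : ℕ) (hn : 2 ≤ n)
    (A : Matrix (Fin n) (Fin n) ℝ) (hA : 0 < sdev A) :
    (3 ≤ n → |permExp (fun π => rankTstd A π ^ 3)| ≤ 5 * betaM A / (n : ℝ)) ∧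
    (4 ≤ n → |permExp (fun π => rankTstd A π ^ 4) - 3| ≤ 97 * deltaM A / (n : ℝ)) := by
  have hn' : (2 : ℝ) ≤ n := by exact_mod_cast hn
  have p0 : (n : ℝ) ≠ 0 := by linarith
  have p1 : (n : ℝ) - 1 ≠ 0 := by linarith
  have hr : ∀ i, ∑ j, hatM A i j = 0 := by
    intro i; simp only [hatM, ← Finset.sum_div, ctr_row A p0, zero_div]
  have hc : ∀ j, ∑ i, hatM A i j = 0 := by
    intro j; simp only [hatM, ← Finset.sum_div, ctr_col A p0, zero_div]
  have hN := hat_sq A p1 hA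
  simp only [rankTstd_eq A p0]
  refine ⟨fun h3 => ?_, fun h4 => ?_⟩
  · rw [third_moment _ h3 hr hc]
    have hn3 : (3 : ℝ) ≤ n := by exact_mod_cast h3
    have q1 : (0 : ℝ) < n - 1 := by linarith
    have q2 : (0 : ℝ) < n - 2 := by linarith
    have hb : |∑ i, ∑ j, hatM A i j ^ 3| ≤ betaM A := by
      refine (Finset.abs_sum_le_sum_abs _ _).trans (Finset.sum_le_sum fun i _ => ?_)
      refine (Finset.abs_sum_le_sum_abs _ _).trans (Finset.sum_le_sum fun j _ => ?_)
      rw [abs_pow]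
    have hcoef : (n : ℝ) / ((n - 1) * (n - 2)) ≤ 5 / n := by
      rw [div_le_div_iff₀ (by positivity) (by positivity)]
      nlinarith
    have hpos : (0 : ℝ) ≤ n / ((n - 1) * (n - 2)) := by positivity
    rw [abs_mul, abs_of_nonneg hpos]
    calc _ ≤ (5 / n : ℝ) * betaM A := mul_le_mul hcoef hb (abs_nonneg _) (by positivity)
      _ = _ := by ring
  · rw [fourth_moment _ h4 hr hc rfl rfl rfl rfl rfl]
    have hn4 : (4 : ℝ) ≤ n := by exact_mod_cast h4
    have hd : deltaM A = ∑ i, ∑ j, hatM A i j ^ 4 := by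
      simp only [deltaM]
      refine Finset.sum_congr rfl fun i _ => Finset.sum_congr rfl fun j _ => ?_
      rw [← abs_pow, abs_of_nonneg (by positivity)]
    rw [hd]
    generalize hatM A = b at *
    have cs : ∀ f : Fin n → ℝ, (∑ i, f i) ^ 2 ≤ n * ∑ i, f i ^ 2 := by
      intro f
      simpa using sq_sum_le_card_mul_sum_sq (s := univ) (f := f)
    have t4 : ∀ i j, (b i j ^ 2) ^ 2 = b i j ^ 4 := fun i j => by ring
    have hRF : ∑ i, (∑ j, b i j ^ 2) ^ 2 ≤ n * ∑ i, ∑ j, b i j ^ 4 := by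
      rw [Finset.mul_sum]
      refine Finset.sum_le_sum fun i _ => (cs _).trans ?_
      simp only [t4]; exact le_rfl
    have hCF : ∑ j, (∑ i, b i j ^ 2) ^ 2 ≤ n * ∑ i, ∑ j, b i j ^ 4 := by
      rw [Finset.sum_comm (f := fun i j => b i j ^ 4), Finset.mul_sum]
      refine Finset.sum_le_sum fun i _ => (cs _).trans ?_
      simp only [t4]; exact le_rfl
    refine fourth_bound _ _ _ _ _ _ hn4 hN (by positivity) (by positivity) (by positivity)
      (by positivity) ?_ hRF hCF ?_
    · refine (cs _).trans ?_
      rw [pow_two (n : ℝ), mul_assoc]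
      exact mul_le_mul_of_nonneg_left hRF (by positivity)
    · rw [Finset.sum_comm (f := fun i j => b i j ^ 2), pow_two, Finset.sum_mul_sum]
      exact Finset.sum_le_sum fun j _ => Finset.sum_le_sum fun k _ =>
        Finset.sum_mul_sq_le_sq_mul_sq _ _ _
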